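/- arXiv:1607.00370 — 3 statements merged into one kernel-verified Lean document; each statement's English description precedes it below -/
import Mathlib

section
/- A finite-dimensional Lie algebra g over a field of characteristic zero is reductive (admits a faithful semisimple finite-dimensional representation) if and only if it admits a nondegenerate trace form, i.e., a finite-dimensional representation ρ such that (x,y) ↦ trace(ρ(x)ρ(y)) is nondegenerate. -/
/-- A finite-dimensional representation of a Lie algebra `L` over `K`. -/
structure FinDimRep (K L : Type) [Field K] [LieRing L] [LieAlgebra K L] : Type 1 where
  carrier : Type
  [isAddCommGroup : AddCommGroup carrier]
  [isModule : Module K carrier]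
  [isLieRingModule : LieRingModule L carrier]
  [isLieModule : LieModule K L carrier]
  [isFinite : FiniteDimensional K carrier]

attribute [instance] FinDimRep.isAddCommGroup FinDimRep.isModule FinDimRep.isLieRingModule
  FinDimRep.isLieModule FinDimRep.isFinite

/-- A Lie algebra is reductive if it has a faithful semisimple (completely
reducible) finite-dimensional representation. -/
def IsReductive (K L : Type) [Field K] [LieRing L] [LieAlgebra K L] : Prop :=
  ∃ R : FinDimRep K L,
    Function.Injective (LieModule.toEnd K L R.carrier) ∧
      ComplementedLattice (LieSubmodule K L R.carrier)

/-!
Let `M` be a faithful semisimple representation of `L`. If `x ∈ [L, I]` commutes with the ideal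
`I`, then `tr (x ^ n) = 0` for all `n ≥ 1`, so `x` acts nilpotently; by Engel's theorem an ideal
of such elements acts nilpotently, and a nilpotent action on a semisimple representation is zero.
Applied to `[L, L] ∩ Z(L)` and to `[L, I]` for `I` abelian, this shows that the radical of `L` is
its centre and meets `[L, L]` trivially. The Killing form then has kernel `Z(L)`, and adding a sum
of characters that separates the points of `L / [L, L]` makes it nondegenerate.

Conversely, trace forms are additive on exact sequences, so a representation and its
semisimplification have the same trace form, and a nondegenerate trace form forces faithfulness.
-/

section Trace

/-- The element `a * b` is the Fitting idempotent of `a`: it projects onto the part on which `a`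
acts invertibly. -/
theorem exists_isIdempotentElem_mul_of_isArtinianRing {R : Type*} [CommRing R] [IsArtinianRing R]
    (a : R) : ∃ (n : ℕ) (b : R), IsIdempotentElem (a * b) ∧ a ^ n * (a * b) = a ^ n := by
  obtain ⟨n, c, hc⟩ := IsArtinian.exists_pow_succ_smul_dvd a (1 : R)
  have hfix (m : ℕ) : a ^ n * (a * c) ^ m = a ^ n := by
    induction m with
    | zero => simp
    | succ m ih =>
      calc a ^ n * (a * c) ^ (m + 1) = a ^ n * (a * c) ^ m * (a * c) := by ring
        _ = a ^ n.succ • c := by rw [ih, smul_eq_mul, pow_succ]; ring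
        _ = a ^ n := by rw [hc, smul_eq_mul, mul_one]
  have hidem : a * (a ^ n * c ^ (n + 1)) = (a * c) ^ (n + 1) := by ring
  refine ⟨n, a ^ n * c ^ (n + 1), ?_, hidem ▸ hfix _⟩
  rw [hidem, IsIdempotentElem]
  calc (a * c) ^ (n + 1) * (a * c) ^ (n + 1)
      = a * c ^ (n + 1) * (a ^ n * (a * c) ^ (n + 1)) := by ring
    _ = (a * c) ^ (n + 1) := by rw [hfix]; ring

open Polynomial in
/-- The Fitting idempotent of `f` is a polynomial in `f` without constant term, so its trace is zero
and, in characteristic zero, it vanishes. -/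
theorem isNilpotent_of_forall_trace_pow_eq_zero {K M : Type*} [Field K] [CharZero K]
    [AddCommGroup M] [Module K M] [FiniteDimensional K M] {f : Module.End K M}
    (hf : ∀ n : ℕ, LinearMap.trace K M (f ^ (n + 1)) = 0) : IsNilpotent f := by
  have : IsArtinianRing (Algebra.adjoin K {f}) := IsArtinianRing.of_finite K _
  obtain ⟨n, ⟨b, hb⟩, hidem, hpow⟩ := exists_isIdempotentElem_mul_of_isArtinianRing
    (⟨f, Algebra.self_mem_adjoin_singleton K f⟩ : Algebra.adjoin K {f})
  replace hidem : IsIdempotentElem (f * b) := congrArg Subtype.val hidem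
  replace hpow : f ^ n * (f * b) = f ^ n := congrArg Subtype.val hpow
  obtain ⟨p, rfl⟩ := Algebra.adjoin_mem_exists_aeval K f hb
  have htrace : LinearMap.trace K M (f * aeval f p) = 0 := by
    simp [aeval_eq_sum_range, Finset.mul_sum, ← pow_succ', hf]
  rw [LinearMap.IsIdempotentElem.eq_zero_of_trace_eq_zero hidem htrace, mul_zero] at hpow
  exact ⟨n, hpow.symm⟩

theorem trace_eq_add_of_exact {R N M P : Type*} [CommRing R] [AddCommGroup N] [Module R N]
    [AddCommGroup M] [Module R M] [AddCommGroup P] [Module R P] [Module.Free R N]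
    [Module.Finite R N] [Module.Free R M] [Module.Finite R M] [Module.Free R P] [Module.Finite R P]
    {i : N →ₗ[R] M} {p : M →ₗ[R] P} (hi : Function.Injective i) (hp : Function.Surjective p)
    (hip : Function.Exact i p) {f : Module.End R M} {g : Module.End R N} {h : Module.End R P}
    (hg : f ∘ₗ i = i ∘ₗ g) (hh : p ∘ₗ f = h ∘ₗ p) :
    LinearMap.trace R M f = LinearMap.trace R N g + LinearMap.trace R P h := by
  obtain ⟨s, hs⟩ := p.exists_rightInverse_of_surjective (LinearMap.range_eq_top.2 hp)
  obtain ⟨r, j, hri, hpj, hsum⟩ : ∃ (r : M →ₗ[R] N) (j : P →ₗ[R] M),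
      r ∘ₗ i = LinearMap.id ∧ p ∘ₗ j = LinearMap.id ∧ i ∘ₗ r + j ∘ₗ p = LinearMap.id := by
    obtain ⟨e, rfl, rfl⟩ := hip.splitSurjectiveEquiv hi ⟨s, hs⟩
    refine ⟨LinearMap.fst R N P ∘ₗ e, e.symm ∘ₗ LinearMap.inr R N P, ?_, ?_, ?_⟩
    · ext; simp
    · ext; simp
    · ext; simp [← map_add]
  calc LinearMap.trace R M f
      = LinearMap.trace R M ((f ∘ₗ i) ∘ₗ r) + LinearMap.trace R M ((f ∘ₗ j) ∘ₗ p) := by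
        rw [← map_add, LinearMap.comp_assoc, LinearMap.comp_assoc, ← LinearMap.comp_add, hsum,
          LinearMap.comp_id]
    _ = LinearMap.trace R N (r ∘ₗ f ∘ₗ i) + LinearMap.trace R P ((p ∘ₗ f) ∘ₗ j) := by
        rw [LinearMap.trace_comp_comm' r, LinearMap.trace_comp_comm' p, LinearMap.comp_assoc]
    _ = LinearMap.trace R N g + LinearMap.trace R P h := by
        rw [hg, hh, ← LinearMap.comp_assoc, hri, LinearMap.id_comp, LinearMap.comp_assoc, hpj,
          LinearMap.comp_id]

end Trace

section LieModule

open LieModule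

variable {R L M N P : Type*} [CommRing R] [LieRing L] [LieAlgebra R L]
  [AddCommGroup M] [Module R M] [LieRingModule L M] [LieModule R L M]
  [AddCommGroup N] [Module R N] [LieRingModule L N] [LieModule R L N]
  [AddCommGroup P] [Module R P] [LieRingModule L P] [LieModule R L P]

theorem traceForm_eq_add_of_exact [Module.Free R N] [Module.Finite R N] [Module.Free R M]
    [Module.Finite R M] [Module.Free R P] [Module.Finite R P] {i : N →ₗ⁅R,L⁆ M} {p : M →ₗ⁅R,L⁆ P}
    (hi : Function.Injective i) (hp : Function.Surjective p) (hip : Function.Exact i p) :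
    traceForm R L M = traceForm R L N + traceForm R L P := by
  ext x y
  refine trace_eq_add_of_exact (i := (i : N →ₗ[R] M)) (p := (p : M →ₗ[R] P)) hi hp hip ?_ ?_ <;>
    ext <;> simp

theorem injective_toEnd_of_nondegenerate_traceForm (h : (traceForm R L M).Nondegenerate) :
    Function.Injective (toEnd R L M) := by
  refine (injective_iff_map_eq_zero _).2 fun x hx ↦ h.1 x fun y ↦ ?_
  rw [traceForm_apply_apply, hx, LinearMap.zero_comp, map_zero]

omit [LieAlgebra R L] [LieModule R L M] [LieModule R L N] in
theorem complementedLattice_Iic_range [ComplementedLattice (LieSubmodule R L M)]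
    {f : M →ₗ⁅R,L⁆ N} (hf : Function.Injective f) : ComplementedLattice (Set.Iic f.range) := by
  let e : LieSubmodule R L M ↪o Set.Iic f.range :=
    OrderEmbedding.ofMapLEIff (fun A ↦ ⟨A.map f, LieSubmodule.map_le_range f⟩) fun _ _ ↦
      LieSubmodule.map_le_map_iff hf
  have he : Function.Surjective e := fun A ↦
    ⟨A.1.comap f, Subtype.ext (LieSubmodule.map_comap_eq A.1 f A.2)⟩
  let e' : LieSubmodule R L M ≃o Set.Iic f.range := RelIso.ofSurjective e he
  exact e'.complementedLattice_iff.1 inferInstance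

/-- The direct sum of two Lie modules, with the componentwise action. -/
instance : LieRingModule L (M × N) where
  bracket x m := (⁅x, m.1⁆, ⁅x, m.2⁆)
  add_lie _ _ _ := Prod.ext (add_lie _ _ _) (add_lie _ _ _)
  lie_add _ _ _ := Prod.ext (lie_add _ _ _) (lie_add _ _ _)
  leibniz_lie _ _ _ := Prod.ext (leibniz_lie _ _ _) (leibniz_lie _ _ _)

instance : LieModule R L (M × N) where
  smul_lie _ _ _ := Prod.ext (smul_lie _ _ _) (smul_lie _ _ _)
  lie_smul _ _ _ := Prod.ext (lie_smul _ _ _) (lie_smul _ _ _)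

variable (R L M N) in
/-- The inclusion of the first summand of a direct sum of Lie modules. -/
def lieProdInl : M →ₗ⁅R,L⁆ M × N where
  __ := LinearMap.inl R M N
  map_lie' := Prod.ext rfl (lie_zero _).symm

variable (R L M N) in
/-- The inclusion of the second summand of a direct sum of Lie modules. -/
def lieProdInr : N →ₗ⁅R,L⁆ M × N where
  __ := LinearMap.inr R M N
  map_lie' := Prod.ext (lie_zero _).symm rfl

variable (R L M N) in
/-- The projection of a direct sum of Lie modules onto its second summand. -/
def lieProdSnd : M × N →ₗ⁅R,L⁆ N where
  __ := LinearMap.snd R M N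
  map_lie' := rfl

theorem traceForm_prod [Module.Free R M] [Module.Finite R M] [Module.Free R N]
    [Module.Finite R N] : traceForm R L (M × N) = traceForm R L M + traceForm R L N :=
  traceForm_eq_add_of_exact (i := lieProdInl R L M N) (p := lieProdSnd R L M N)
    LinearMap.inl_injective LinearMap.snd_surjective .inl_snd

instance complementedLattice_prod [ComplementedLattice (LieSubmodule R L M)]
    [ComplementedLattice (LieSubmodule R L N)] :
    ComplementedLattice (LieSubmodule R L (M × N)) := by
  refine complementedLattice_of_complementedLattice_Iic (f := id)
    (s := {(lieProdInl R L M N).range, (lieProdInr R L M N).range}) ?_ ?_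
  · rintro _ (rfl | rfl)
    · exact complementedLattice_Iic_range LinearMap.inl_injective
    · exact complementedLattice_Iic_range LinearMap.inr_injective
  · rw [iSup_pair, ← LieSubmodule.toSubmodule_inj]
    exact LinearMap.sup_range_inl_inr

theorem lie_top_eq_bot_of_isNilpotent [ComplementedLattice (LieSubmodule R L M)] (I : LieIdeal R L)
    [LieModule.IsNilpotent I M] : ⁅I, (⊤ : LieSubmodule R L M)⁆ = ⊥ := by
  obtain ⟨C, hC⟩ := exists_isCompl ⁅I, (⊤ : LieSubmodule R L M)⁆
  have hIC : ⁅I, C⁆ = ⊥ :=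
    le_bot_iff.1 (hC.inf_eq_bot ▸ le_inf (LieSubmodule.mono_lie_right I le_top)
      (LieSubmodule.lie_le_right C I))
  have hfix : ⁅I, ⁅I, (⊤ : LieSubmodule R L M)⁆⁆ = ⁅I, (⊤ : LieSubmodule R L M)⁆ := by
    conv_rhs => rw [← hC.sup_eq_top, LieSubmodule.lie_sup, hIC, sup_bot_eq]
  have hlcs (k : ℕ) : ⁅I, (⊤ : LieSubmodule R L M)⁆ ≤ I.lcs M k := by
    induction k with
    | zero => exact le_top
    | succ k ih =>
      rw [LieIdeal.lcs_succ]
      exact hfix.ge.trans (LieSubmodule.mono_lie_right I ih)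
  obtain ⟨k, hk⟩ := (LieModule.isNilpotent_iff R I M).1 inferInstance
  rw [eq_bot_iff]
  refine (hlcs k).trans_eq ?_
  rw [← LieSubmodule.toSubmodule_inj, LieIdeal.coe_lcs_eq, hk]
  rfl

attribute [local instance] LieRing.ofAssociativeRing in
theorem trace_toEnd_mul_eq_zero_of_mem_lie_top {I : LieIdeal R L} {x : L}
    (hx : x ∈ ⁅(⊤ : LieIdeal R L), I⁆) {f : Module.End R M}
    (hf : ∀ b ∈ I, Commute (toEnd R L M b) f) :
    LinearMap.trace R M (toEnd R L M x * f) = 0 := by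
  rw [← LieSubmodule.mem_toSubmodule, LieSubmodule.lieIdeal_oper_eq_linear_span'] at hx
  induction hx using Submodule.span_induction with
  | mem _ h =>
    obtain ⟨a, -, b, hb, rfl⟩ := h
    rw [LieHom.map_lie, LinearMap.trace_lie_mul_eq, (hf b hb).lie_eq, mul_zero, map_zero]
  | zero => simp
  | add u v _ _ hu hv => simp [add_mul, hu, hv]
  | smul t u _ hu => simp [hu]

end LieModule

section Faithful

open LieAlgebra LieModule

theorem finiteDimensional_of_isFaithful (K L M : Type*) [Field K] [LieRing L] [LieAlgebra K L]
    [AddCommGroup M] [Module K M] [LieRingModule L M] [LieModule K L M] [FiniteDimensional K M]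
    [IsFaithful K L M] : FiniteDimensional K L :=
  Module.Finite.of_injective (toEnd K L M : L →ₗ[K] Module.End K M) IsFaithful.injective_toEnd

variable {K L : Type*} (M : Type*) [Field K] [CharZero K] [LieRing L] [LieAlgebra K L]
  [AddCommGroup M] [Module K M] [LieRingModule L M] [LieModule K L M] [FiniteDimensional K M]
  [IsFaithful K L M] [ComplementedLattice (LieSubmodule K L M)]

include M

theorem eq_bot_of_le_lie_top_of_lie_eq_bot {I J : LieIdeal K L} (hJ : J ≤ ⁅(⊤ : LieIdeal K L), I⁆)
    (hIJ : ⁅I, J⁆ = ⊥) : J = ⊥ := by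
  have hcomm (x : L) (hx : x ∈ J) (b : L) (hb : b ∈ I) :
      Commute (toEnd K L M b) (toEnd K L M x) := by
    rw [LieSubmodule.lie_eq_bot_iff] at hIJ
    ext m
    simpa [hIJ b hb x hx] using leibniz_lie b x m
  have hnil (x : L) (hx : x ∈ J) : _root_.IsNilpotent (toEnd K L M x) := by
    refine isNilpotent_of_forall_trace_pow_eq_zero fun n ↦ ?_
    rw [pow_succ']
    exact trace_toEnd_mul_eq_zero_of_mem_lie_top (hJ hx) fun b hb ↦ (hcomm x hx b hb).pow_right n
  have : LieModule.IsNilpotent J M :=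
    (isNilpotent_iff_forall' (R := K)).2 fun x ↦ hnil x x.2
  have htriv := (LieSubmodule.lie_eq_bot_iff _ _).1 (lie_top_eq_bot_of_isNilpotent (M := M) J)
  refine (LieSubmodule.eq_bot_iff J).2 fun x hx ↦ ext_of_isFaithful (R := K) M fun m ↦ ?_
  rw [htriv x hx m trivial, zero_lie]

theorem disjoint_derived_center :
    Disjoint ⁅(⊤ : LieIdeal K L), (⊤ : LieIdeal K L)⁆ (center K L) := by
  refine disjoint_iff.2 (eq_bot_of_le_lie_top_of_lie_eq_bot M inf_le_left ?_)
  rw [LieSubmodule.lie_eq_bot_iff]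
  exact fun x _ z hz ↦ hz.2 x

theorem le_center_of_lie_self_eq_bot {I : LieIdeal K L} (hII : ⁅I, I⁆ = ⊥) :
    I ≤ center K L := by
  have htop : ⁅(⊤ : LieIdeal K L), I⁆ = ⊥ :=
    eq_bot_of_le_lie_top_of_lie_eq_bot M le_rfl
      (le_bot_iff.1 (hII ▸ LieSubmodule.mono_lie_right I (LieSubmodule.lie_le_right I ⊤)))
  exact fun x hx y ↦ (LieSubmodule.lie_eq_bot_iff _ _).1 htop y trivial x hx

theorem le_center_of_derivedSeriesOfIdeal_eq_bot {k : ℕ} {I : LieIdeal K L}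
    (hI : derivedSeriesOfIdeal K L k I = ⊥) : I ≤ center K L := by
  induction k generalizing I with
  | zero => exact hI.trans_le bot_le
  | succ k ih =>
    rw [derivedSeriesOfIdeal_add I k 1] at hI
    have hII : ⁅I, I⁆ = ⊥ :=
      le_bot_iff.1 (disjoint_derived_center M (LieSubmodule.mono_lie le_top le_top) (ih hI))
    exact le_center_of_lie_self_eq_bot M hII

theorem hasCentralRadical_of_isFaithful : HasCentralRadical K L := by
  have : FiniteDimensional K L := finiteDimensional_of_isFaithful K L M
  obtain ⟨k, hk⟩ := (isSolvable_iff K (radical K L)).1 inferInstance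
  rw [LieIdeal.derivedSeries_eq_bot_iff] at hk
  exact hasCentralRadical_of_radical_le K L (le_center_of_derivedSeriesOfIdeal_eq_bot M hk)

end Faithful

section HasCentralRadical

open LieAlgebra LieModule

variable {K L : Type*} [Field K] [LieRing L] [LieAlgebra K L] [FiniteDimensional K L]

theorem mem_center_of_forall_killingForm_lie_eq_zero [CharZero K] [HasCentralRadical K L]
    (hL : Disjoint ⁅(⊤ : LieIdeal K L), (⊤ : LieIdeal K L)⁆ (center K L)) {x : L}
    (hx : ∀ a b : L, killingForm K L x ⁅a, b⁆ = 0) : x ∈ center K L := by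
  intro a
  have hderived : ⁅a, x⁆ ∈ ⁅(⊤ : LieIdeal K L), (⊤ : LieIdeal K L)⁆ :=
    LieSubmodule.lie_mem_lie trivial trivial
  have hrad : ⁅a, x⁆ ∈ radical K L := by
    refine killingCompl_top_le_radical K L ((LieIdeal.mem_killingCompl K L ⊤).2 fun b _ ↦ ?_)
    rw [← traceForm_apply_lie_apply, traceForm_comm, hx]
  rw [HasCentralRadical.radical_eq_center] at hrad
  exact (LieSubmodule.mem_bot _).1 (hL.le_bot ⟨hderived, hrad⟩)

theorem killingForm_apply_eq_zero_of_mem_center {x : L} (hx : x ∈ center K L) (y : L) :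
    killingForm K L x y = 0 := by
  rw [traceForm_comm]
  exact (LieIdeal.mem_killingCompl K L ⊤).1
    (LieIdeal.le_killingCompl_top_of_isLieAbelian K L (center K L) hx) y trivial

end HasCentralRadical

namespace FinDimRep

open LieAlgebra LieModule

variable {K L : Type} [Field K] [LieRing L] [LieAlgebra K L]

variable (K L) in
/-- The adjoint representation. -/
def adjoint [FiniteDimensional K L] : FinDimRep K L where
  carrier := L

/-- The direct sum of two representations. -/
def prod (A B : FinDimRep K L) : FinDimRep K L where
  carrier := A.carrier × B.carrier

/-- The direct sum of the characters `x ↦ l x i`, realised as multiplication by `l x` on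
`ι → K`. -/
def diagonal {ι : Type} [Finite ι] (l : L →ₗ[K] ι → K) (hl : ∀ x y : L, l ⁅x, y⁆ = 0) :
    FinDimRep K L :=
  letI : LieRingModule L (ι → K) :=
    { bracket x v := l x * v
      add_lie x y v := by rw [map_add, add_mul]
      lie_add x := mul_add (l x)
      leibniz_lie x y v := by
        change l x * (l y * v) = l ⁅x, y⁆ * v + l y * (l x * v)
        rw [hl]
        ring }
  letI : LieModule K L (ι → K) :=
    { smul_lie t x v := by
        change l (t • x) * v = t • (l x * v)
        rw [map_smul, smul_mul_assoc]
      lie_smul t x := mul_smul_comm t (l x) }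
  { carrier := ι → K }

theorem traceForm_diagonal {ι : Type} [Fintype ι] (l : L →ₗ[K] ι → K)
    (hl : ∀ x y : L, l ⁅x, y⁆ = 0) (x y : L) :
    traceForm K L (diagonal l hl).carrier x y = l x ⬝ᵥ l y := by
  classical
  have hmul : toEnd K L (diagonal l hl).carrier x ∘ₗ toEnd K L (diagonal l hl).carrier y =
      (Matrix.diagonal (l x * l y)).toLin' := by
    refine LinearMap.ext fun v : ι → K ↦ ?_
    change l x * (l y * v) = (Matrix.diagonal (l x * l y)).toLin' v
    refine funext fun i ↦ ?_
    simp [Matrix.mulVec_diagonal, mul_assoc]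
  rw [traceForm_apply_apply, hmul]
  exact (Matrix.trace_toLin'_eq _).trans (Matrix.trace_diagonal _)

theorem exists_ker_traceForm_eq_derived [FiniteDimensional K L] :
    ∃ A : FinDimRep K L, LinearMap.ker (traceForm K L A.carrier) =
      (⁅(⊤ : LieIdeal K L), (⊤ : LieIdeal K L)⁆ : LieIdeal K L).toSubmodule := by
  set D : Submodule K L := (⁅(⊤ : LieIdeal K L), (⊤ : LieIdeal K L)⁆ : LieIdeal K L).toSubmodule
  let l : L →ₗ[K] Fin (Module.finrank K (L ⧸ D)) → K :=
    (Module.finBasis K (L ⧸ D)).equivFun ∘ₗ D.mkQ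
  have hker : LinearMap.ker l = D := by simp [l]
  have hsurj : Function.Surjective l :=
    (Module.finBasis K (L ⧸ D)).equivFun.surjective.comp D.mkQ_surjective
  have hl (x y : L) : l ⁅x, y⁆ = 0 := by
    rw [← LinearMap.mem_ker, hker]
    exact LieSubmodule.lie_mem_lie trivial trivial
  refine ⟨diagonal l hl, ?_⟩
  refine .trans (Submodule.ext fun x ↦ ?_) hker
  rw [LinearMap.mem_ker, LinearMap.mem_ker, LinearMap.ext_iff, ← dotProduct_eq_zero_iff,
    hsurj.forall]
  simp only [traceForm_diagonal, LinearMap.zero_apply]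

theorem exists_nondegenerate_traceForm [CharZero K] [FiniteDimensional K L] [HasCentralRadical K L]
    (hL : Disjoint ⁅(⊤ : LieIdeal K L), (⊤ : LieIdeal K L)⁆ (center K L)) :
    ∃ R : FinDimRep K L, (traceForm K L R.carrier).Nondegenerate := by
  obtain ⟨A, hA⟩ := exists_ker_traceForm_eq_derived (K := K) (L := L)
  refine ⟨(adjoint K L).prod A,
    (traceForm_isSymm K L _).isRefl.nondegenerate_iff_separatingLeft.2 fun x hx ↦ ?_⟩
  have hsum (y : L) : killingForm K L x y + traceForm K L A.carrier x y = 0 := by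
    rw [← hx y]
    exact (LinearMap.congr_fun₂ traceForm_prod x y).symm
  have hcenter : x ∈ center K L := by
    refine mem_center_of_forall_killingForm_lie_eq_zero hL fun a b ↦ ?_
    have hab : ⁅a, b⁆ ∈ LinearMap.ker (traceForm K L A.carrier) :=
      hA ▸ LieSubmodule.lie_mem_lie trivial trivial
    simpa [traceForm_comm K L A.carrier x, LinearMap.mem_ker.1 hab] using hsum ⁅a, b⁆
  have hderived : x ∈ ⁅(⊤ : LieIdeal K L), (⊤ : LieIdeal K L)⁆ := by
    rw [← LieSubmodule.mem_toSubmodule, ← hA, LinearMap.mem_ker]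
    ext y
    simpa [killingForm_apply_eq_zero_of_mem_center hcenter y] using hsum y
  exact (LieSubmodule.mem_bot _).1 (hL.le_bot ⟨hderived, hcenter⟩)

theorem exists_complementedLattice_traceForm_eq (R : FinDimRep K L) :
    ∃ S : FinDimRep K L, ComplementedLattice (LieSubmodule K L S.carrier) ∧
      traceForm K L S.carrier = traceForm K L R.carrier := by
  induction hd : Module.finrank K R.carrier using Nat.strong_induction_on generalizing R with
  | h d ih =>
    by_cases hW : ∃ W : LieSubmodule K L R.carrier, W ≠ ⊥ ∧ W ≠ ⊤
    · obtain ⟨W, hbot, htop⟩ := hW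
      have : FiniteDimensional K W := inferInstanceAs (FiniteDimensional K W.toSubmodule)
      have : FiniteDimensional K (R.carrier ⧸ W) :=
        inferInstanceAs (FiniteDimensional K (R.carrier ⧸ W.toSubmodule))
      have hadd : Module.finrank K (R.carrier ⧸ W) + Module.finrank K W = d :=
        hd ▸ W.toSubmodule.finrank_quotient_add_finrank
      have hsub : Module.finrank K W < d :=
        hd ▸ Submodule.finrank_lt (by simpa using htop)
      have hquot : Module.finrank K (R.carrier ⧸ W) < d := by
        have : 0 < Module.finrank K W :=
          Submodule.one_le_finrank_iff.2 (by simpa using hbot)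
        lia
      obtain ⟨A, _, hA⟩ := ih _ hsub { carrier := W } rfl
      obtain ⟨B, _, hB⟩ := ih _ hquot { carrier := R.carrier ⧸ W } rfl
      have hexact : Function.Exact W.incl (LieSubmodule.Quotient.mk' W) :=
        LinearMap.exact_subtype_mkQ W.toSubmodule
      refine ⟨A.prod B, complementedLattice_prod, traceForm_prod.trans ?_⟩
      rw [hA, hB]
      exact (traceForm_eq_add_of_exact (i := W.incl) (p := LieSubmodule.Quotient.mk' W)
        Subtype.val_injective (LieSubmodule.Quotient.surjective_mk' W) hexact).symm
    · refine ⟨R, ⟨fun W ↦ ?_⟩, rfl⟩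
      obtain rfl | rfl : W = ⊥ ∨ W = ⊤ := by by_contra! h; exact hW ⟨W, h⟩
      · exact ⟨⊤, isCompl_bot_top⟩
      · exact ⟨⊥, isCompl_top_bot⟩

end FinDimRep

open LieAlgebra LieModule in
theorem isReductive_iff_nondegenerate_traceForm_general
    (K L : Type) [Field K] [CharZero K] [LieRing L] [LieAlgebra K L] :
    IsReductive K L ↔
      ∃ R : FinDimRep K L, (traceForm K L R.carrier).Nondegenerate := by
  constructor
  · rintro ⟨R, hinj, _⟩
    have : IsFaithful K L R.carrier := ⟨hinj⟩
    have : FiniteDimensional K L := finiteDimensional_of_isFaithful K L R.carrier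
    have : HasCentralRadical K L := hasCentralRadical_of_isFaithful R.carrier
    exact FinDimRep.exists_nondegenerate_traceForm (disjoint_derived_center R.carrier)
  · rintro ⟨R, hR⟩
    obtain ⟨S, hS, htrace⟩ := R.exists_complementedLattice_traceForm_eq
    exact ⟨S, injective_toEnd_of_nondegenerate_traceForm (htrace ▸ hR), hS⟩

/-- a finite-dimensional Lie algebra over a field of characteristic
zero is reductive iff it admits a nondegenerate trace form. -/
theorem isReductive_iff_nondegenerate_traceForm
    (K L : Type) [Field K] [CharZero K] [LieRing L] [LieAlgebra K L]
    [FiniteDimensional K L] :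
    IsReductive K L ↔
      ∃ R : FinDimRep K L, (LieModule.traceForm K L R.carrier).Nondegenerate :=
  isReductive_iff_nondegenerate_traceForm_general K L
end

section
/- Let g be a finite-dimensional reductive Lie algebra over a field of characteristic zero and let p, q ≤ g be parabolic subalgebras. Then r := (p ∩ q) + nil(q) is a parabolic subalgebra of g, with nilpotent radical nil(r) = (nil(p) ∩ q) + nil(q). -/
/-- Orthogonal complement of a subspace with respect to a bilinear form. -/
def perp {K L : Type} [Field K] [LieRing L] [LieAlgebra K L]
    (B : LinearMap.BilinForm K L) (p : Submodule K L) : Submodule K L where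
  carrier := {x : L | ∀ y ∈ p, B x y = 0}
  zero_mem' := by intro y hy; simp
  add_mem' := by
    intro u v hu hv y hy
    simp [hu y hy, hv y hy]
  smul_mem' := by
    intro c u hu y hy
    simp [hu y hy]

/-- A subalgebra `p` of a reductive Lie algebra with admissible form `B` is
parabolic iff `p^⊥ ⊆ p` and `p` is self-normalizing (paper, Theorem 3.4 (4)). -/
def IsParabolic {K L : Type} [Field K] [LieRing L] [LieAlgebra K L]
    (B : LinearMap.BilinForm K L) (p : LieSubalgebra K L) : Prop :=
  perp B p.toSubmodule ≤ p.toSubmodule ∧ p.normalizer = p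


/-!
A subalgebra `p` is parabolic iff `p^⊥ ⊆ p` and `p^⊥` acts nilpotently on the representation `V`
that defines the trace form. Granting this, duality and the modular law give
`((p ∩ q) + q^⊥)^⊥ = (p^⊥ ∩ q) + q^⊥`; and the sum of a nilpotent element of `q` and an element of
an ideal of `q` acting nilpotently is nilpotent, by Engel's theorem.

If `p^⊥` acts nilpotently, then it is an ideal of the normalizer of `p`, and is orthogonal to it
because `y z` is a nilpotent endomorphism for `y` in the normalizer and `z ∈ p^⊥`. So the normalizer
lies in `p^⊥⊥ = p`. Conversely, if `p` is self-normalizing then `[p, p^⊥] = p^⊥`, and the claim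
follows from a relative form of Cartan's criterion: an ideal `I` of `L` orthogonal to `L` for the
trace form has `[L, I]` acting nilpotently. For a single commutator `[y, z]`, the trace form of
`K y + I` is `c χ ⊗ χ` for a character `χ`. It is cancelled, without extending `K`, by adding to `V`
a two-dimensional module on which `x` acts as `χ(x) T` with `tr(T²) = -c`, so that the usual
criterion applies. Sums of commutators are nilpotent since `[I, I]` acts nilpotently.
-/

open LieAlgebra
open LieModule hiding IsNilpotent

section NilpotentIdeal

variable {R L M : Type*} [CommRing R] [LieRing L] [LieAlgebra R L]
  [AddCommGroup M] [Module R M] [LieRingModule L M] [LieModule R L M]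

/-- The subalgebra `R x + I` generated by an ideal `I` and an element `x`. It reduces nilpotency
questions about single elements `x + z` and `⁅x, z⁆`, with `z ∈ I`, to questions about a
one-dimensional extension of `I`. -/
def spanSup (I : LieIdeal R L) (x : L) : LieSubalgebra R L where
  toSubmodule := R ∙ x ⊔ I.toSubmodule
  lie_mem' := I.toLieSubalgebra.lie_mem_sup_of_mem_normalizer
    ((I.toLieSubalgebra.mem_normalizer_iff x).2 fun _ hy ↦ I.lie_mem hy)

lemma mem_spanSup {I : LieIdeal R L} {x y : L} :
    y ∈ spanSup I x ↔ ∃ c : R, ∃ z ∈ I, c • x + z = y := by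
  change y ∈ R ∙ x ⊔ I.toSubmodule ↔ _
  simp [Submodule.mem_sup, Submodule.mem_span_singleton]

lemma self_mem_spanSup (I : LieIdeal R L) (x : L) : x ∈ spanSup I x :=
  Submodule.mem_sup_left (Submodule.mem_span_singleton_self x)

lemma mem_spanSup_of_mem {I : LieIdeal R L} (x : L) {z : L} (hz : z ∈ I) : z ∈ spanSup I x :=
  Submodule.mem_sup_right hz

lemma lie_mem_of_mem_spanSup {I : LieIdeal R L} {x a b : L} (ha : a ∈ spanSup I x)
    (hb : b ∈ spanSup I x) : ⁅a, b⁆ ∈ I := by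
  obtain ⟨s, u, hu, rfl⟩ := mem_spanSup.1 ha
  obtain ⟨t, v, hv, rfl⟩ := mem_spanSup.1 hb
  have hx : ⁅s • x, t • x⁆ = 0 := by simp
  rw [add_lie, lie_add (s • x), hx, zero_add]
  exact add_mem (lie_mem_right R L I _ _ hv) (lie_mem_left R L I _ _ hu)

lemma isNilpotent_spanSup {I : LieIdeal R L} [LieModule.IsNilpotent I M] {x : L}
    (hx : IsNilpotent (toEnd R L M x)) : LieModule.IsNilpotent (spanSup I x) M := by
  let J : LieIdeal R (spanSup I x) := I.comap (spanSup I x).incl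
  let toI : J →ₗ⁅R⁆ I :=
    { toFun y := ⟨y, y.2⟩, map_add' _ _ := rfl, map_smul' _ _ := rfl, map_lie' := rfl }
  have hJ : LieModule.IsNilpotent J M :=
    Function.Injective.lieModuleIsNilpotent (f := toI) (g := LinearMap.id) (fun _ _ ↦ rfl)
      Function.injective_id
  refine LieSubmodule.isNilpotentOfIsNilpotentSpanSupEqTop
    (I := J) (x := ⟨x, self_mem_spanSup I x⟩) ?_ hx hJ
  rw [eq_top_iff]
  rintro ⟨y, hy⟩ -
  obtain ⟨c, z, hz, rfl⟩ := mem_spanSup.1 hy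
  exact Submodule.add_mem_sup (Submodule.smul_mem _ c (Submodule.mem_span_singleton_self _))
    (show (⟨z, mem_spanSup_of_mem x hz⟩ : spanSup I x) ∈ J from hz)

lemma isNilpotent_toEnd_add_of_mem {I : LieIdeal R L} [LieModule.IsNilpotent I M] {x z : L}
    (hx : IsNilpotent (toEnd R L M x)) (hz : z ∈ I) :
    IsNilpotent (toEnd R L M (x + z)) :=
  have : LieModule.IsNilpotent (spanSup I x) M := isNilpotent_spanSup hx
  isNilpotent_toEnd_of_isNilpotent R (spanSup I x) M
    ⟨x + z, add_mem (self_mem_spanSup I x) (mem_spanSup_of_mem x hz)⟩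

lemma isNilpotent_toEnd_add [LieModule.IsNilpotent (derivedSeries R L 1) M] {x y : L}
    (hx : IsNilpotent (toEnd R L M x)) (hy : IsNilpotent (toEnd R L M y)) :
    IsNilpotent (toEnd R L M (x + y)) := by
  let E := spanSup (derivedSeries R L 1) y
  let J : LieIdeal R L :=
    { E.toSubmodule with
      lie_mem {a b} _ := mem_spanSup_of_mem y <|
        LieSubmodule.lie_mem_lie (LieSubmodule.mem_top a) (LieSubmodule.mem_top b) }
  have : LieModule.IsNilpotent J M := isNilpotent_spanSup (I := derivedSeries R L 1) hy
  exact isNilpotent_toEnd_add_of_mem (I := J) hx (self_mem_spanSup _ y)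

lemma traceForm_eq_zero_of_mem_isNilpotent [IsReduced R] {I : LieIdeal R L}
    [LieModule.IsNilpotent I M] (x : L) {z : L} (hz : z ∈ I) : traceForm R L M x z = 0 := by
  obtain ⟨n, hn⟩ := (isNilpotent_iff R I M).1 ‹_›
  have hlcs (k : ℕ) (m : M) : ((toEnd R L M x ∘ₗ toEnd R L M z) ^ k) m ∈ I.lcs M k := by
    induction k with
    | zero => simp
    | succ k ih =>
      rw [pow_succ', LieIdeal.lcs_succ]
      exact LieSubmodule.lie_mem _ (LieSubmodule.lie_mem_lie hz ih)
  refine (LinearMap.isNilpotent_trace_of_isNilpotent ⟨n, ?_⟩).eq_zero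
  ext m
  have hm := hlcs n m
  rwa [← LieSubmodule.mem_toSubmodule, LieIdeal.coe_lcs_eq, hn] at hm

end NilpotentIdeal

section Cartan

attribute [local instance] LieRing.ofAssociativeRing

variable {K L M : Type*} [Field K] [CharZero K] [LieRing L] [LieAlgebra K L]
  [AddCommGroup M] [Module K M] [FiniteDimensional K M]

lemma isNilpotent_apply_of_trace_mul_eq_zero (ρ : L →ₗ⁅K⁆ Module.End K M)
    (h : ∀ x y, LinearMap.trace K M (ρ x * ρ y) = 0) {x : L} (hx : x ∈ derivedSeries K L 1) :
    IsNilpotent (ρ x) := by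
  let _ : LieRingModule L M := LieRingModule.compLieHom M ρ
  have _ : LieModule K L M := LieModule.compLieHom M ρ
  have hzero : traceForm K L M = 0 := LinearMap.ext₂ h
  exact isNilpotent_iff_forall'.mp (isNilpotent_derivedSeries_of_traceForm_eq_zero hzero) ⟨x, hx⟩

variable [LieRingModule L M] [LieModule K L M]

variable (M) in
/-- The representation `x ↦ x ⊕ χ(x) T` of `L` on `M × V`, where the character `χ` makes
`L` act on `V` by multiples of the endomorphism `T`. Its trace form is that of `M` plus
`tr(T²) χ ⊗ χ`, which allows a rank-one trace form on `M` to be cancelled. It is bundled as a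
homomorphism because products of Lie modules are not available as modules. -/
def prodSMulRep {V : Type*} [AddCommGroup V] [Module K V] (χ : LieCharacter K L)
    (T : Module.End K V) : L →ₗ⁅K⁆ Module.End K (M × V) where
  toFun x := (toEnd K L M x).prodMap (χ x • T)
  map_add' x y := by ext <;> simp [add_smul]
  map_smul' c x := by ext <;> simp [mul_smul]
  map_lie' {x y} := by ext <;> simp [Ring.lie_def, smul_smul, mul_comm]

lemma isNilpotent_toEnd_of_traceForm_eq_mul_character (χ : LieCharacter K L) (c : K)
    (h : ∀ x y, traceForm K L M x y = c * (χ x * χ y)) {x : L}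
    (hx : x ∈ derivedSeries K L 1) : IsNilpotent (toEnd K L M x) := by
  let T : Module.End K (Fin 2 → K) := Matrix.toLin' !![0, -c / 2; 1, 0]
  have hT : LinearMap.trace K _ (T * T) = -c := by
    rw [Module.End.mul_eq_comp, ← Matrix.toLin'_mul, Matrix.trace_toLin'_eq]
    simp [Matrix.trace_fin_two]
  have hzero (x y : L) :
      LinearMap.trace K _ (prodSMulRep M χ T x * prodSMulRep M χ T y) = 0 := by
    have hmul : prodSMulRep M χ T x * prodSMulRep M χ T y =
        (toEnd K L M x ∘ₗ toEnd K L M y).prodMap ((χ x * χ y) • (T * T)) := by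
      ext <;> simp [prodSMulRep, smul_smul, mul_comm]
    rw [hmul, LinearMap.trace_prodMap', ← traceForm_apply_apply, h, map_smul, hT, smul_eq_mul]
    ring
  obtain ⟨n, hn⟩ := isNilpotent_apply_of_trace_mul_eq_zero _ hzero hx
  have hfst := Module.End.commute_pow_left_of_commute (f := LinearMap.fst K M (Fin 2 → K))
    (g := prodSMulRep M χ T x) (g₂ := toEnd K L M x) rfl n
  refine ⟨n, LinearMap.ext fun m ↦ ?_⟩
  simpa [hn] using LinearMap.congr_fun hfst (m, 0)

lemma isNilpotent_toEnd_lie_of_traceForm_eq_zero {I : LieIdeal K L}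
    (h : ∀ x, ∀ z ∈ I, traceForm K L M x z = 0) (y : L) {z : L} (hz : z ∈ I) :
    IsNilpotent (toEnd K L M ⁅y, z⁆) := by
  let χ : LieCharacter K (spanSup I y) :=
    { (traceForm K L M y).comp (spanSup I y).toSubmodule.subtype with
      map_lie' {a b} := by
        simpa [Ring.lie_def, mul_comm] using h y _ (lie_mem_of_mem_spanSup a.2 b.2) }
  refine isNilpotent_toEnd_of_traceForm_eq_mul_character (M := M) χ (traceForm K L M y y)⁻¹ ?_
    (x := ⁅(⟨y, self_mem_spanSup I y⟩ : spanSup I y), ⟨z, mem_spanSup_of_mem y hz⟩⁆) ?_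
  · rintro ⟨a, ha⟩ ⟨b, hb⟩
    obtain ⟨s, u, hu, rfl⟩ := mem_spanSup.1 ha
    obtain ⟨t, v, hv, rfl⟩ := mem_spanSup.1 hb
    change traceForm K L M (s • y + u) (t • y + v) = (traceForm K L M y y)⁻¹ *
      (traceForm K L M y (s • y + u) * traceForm K L M y (t • y + v))
    simp only [map_add, map_smul, LinearMap.add_apply, LinearMap.smul_apply, smul_eq_mul,
      traceForm_comm K L M u y, h _ u hu, h _ v hv]
    -- If `traceForm y y = 0`, both sides vanish, so the convention `0⁻¹ = 0` does no harm.
    grind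
  · exact LieSubmodule.lie_mem_lie (LieSubmodule.mem_top _) (LieSubmodule.mem_top _)

theorem isNilpotent_lie_top_of_traceForm_eq_zero {I : LieIdeal K L}
    (h : ∀ x, ∀ z ∈ I, traceForm K L M x z = 0) :
    LieModule.IsNilpotent (⁅(⊤ : LieIdeal K L), I⁆ : LieIdeal K L) M := by
  have hderived : LieModule.IsNilpotent (derivedSeries K I 1) M :=
    isNilpotent_derivedSeries_of_traceForm_eq_zero <| LinearMap.ext₂ fun x z ↦ h x z z.2
  rw [isNilpotent_iff_forall' (R := K)]
  rintro ⟨w, hw⟩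
  suffices ∃ hwI : w ∈ I, IsNilpotent (toEnd K I M ⟨w, hwI⟩) from this.2
  rw [← LieSubmodule.mem_toSubmodule, LieSubmodule.lieIdeal_oper_eq_linear_span'] at hw
  induction hw using Submodule.span_induction with
  | mem w hw =>
    obtain ⟨y, -, z, hz, rfl⟩ := hw
    exact ⟨I.lie_mem hz, isNilpotent_toEnd_lie_of_traceForm_eq_zero (M := M) h y hz⟩
  | zero => exact ⟨I.zero_mem, (map_zero (toEnd K I M)).symm ▸ .zero⟩
  | add u v _ _ hu hv => exact ⟨I.add_mem hu.1 hv.1, isNilpotent_toEnd_add (L := I) hu.2 hv.2⟩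
  | smul c u _ hu =>
    exact ⟨I.smul_mem c hu.1, (map_smul (toEnd K I M) c ⟨u, hu.1⟩) ▸ hu.2.smul c⟩

end Cartan

section Perp

variable {K L : Type} [Field K] [LieRing L] [LieAlgebra K L] {B : LinearMap.BilinForm K L}

lemma perp_eq_orthogonal (hs : B.IsSymm) (W : Submodule K L) : perp B W = B.orthogonal W := by
  ext x
  exact forall₂_congr fun y _ ↦ by rw [hs.eq_iff]

lemma perp_perp [FiniteDimensional K L] (hs : B.IsSymm) (hnd : B.Nondegenerate)
    (W : Submodule K L) : perp B (perp B W) = W := by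
  simp only [perp_eq_orthogonal hs]
  exact LinearMap.BilinForm.orthogonal_orthogonal hnd hs.isRefl W

lemma perp_sup (W W' : Submodule K L) : perp B (W ⊔ W') = perp B W ⊓ perp B W' := by
  refine le_antisymm (fun x hx ↦ ⟨fun y hy ↦ hx y (Submodule.mem_sup_left hy),
    fun y hy ↦ hx y (Submodule.mem_sup_right hy)⟩) ?_
  rintro x ⟨hx, hx'⟩ _ hy
  obtain ⟨u, hu, v, hv, rfl⟩ := Submodule.mem_sup.1 hy
  rw [map_add, hx u hu, hx' v hv, add_zero]

lemma perp_anti {W W' : Submodule K L} (h : W ≤ W') : perp B W' ≤ perp B W :=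
  fun _ hx y hy ↦ hx y (h hy)

variable [FiniteDimensional K L]

lemma perp_inf (hs : B.IsSymm) (hnd : B.Nondegenerate) (W W' : Submodule K L) :
    perp B (W ⊓ W') = perp B W ⊔ perp B W' := by
  rw [← perp_perp hs hnd (perp B W ⊔ perp B W'), perp_sup, perp_perp hs hnd, perp_perp hs hnd]

lemma perp_inf_sup_perp (hs : B.IsSymm) (hnd : B.Nondegenerate) (W : Submodule K L)
    {W' : Submodule K L} (h : perp B W' ≤ W') :
    perp B (W ⊓ W' ⊔ perp B W') = perp B W ⊓ W' ⊔ perp B W' := by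
  rw [perp_sup, perp_perp hs hnd, perp_inf hs hnd, sup_comm, sup_inf_assoc_of_le _ h, sup_comm]

end Perp

section Parabolic

variable {K L : Type} [Field K] [LieRing L] [LieAlgebra K L] {B : LinearMap.BilinForm K L}

lemma lie_mem_perp (hinv : B.lieInvariant L) {p : LieSubalgebra K L} {y z : L}
    (hy : y ∈ p.normalizer) (hz : z ∈ perp B p.toSubmodule) : ⁅y, z⁆ ∈ perp B p.toSubmodule := by
  intro u hu
  rw [hinv, hz _ ((p.mem_normalizer_iff y).1 hy u hu), neg_zero]

/-- The intersection of `p^⊥` with the normalizer of `p`, as an ideal of the normalizer; for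
parabolic `p` this is the nilpotent radical `nil(p)`, viewed as an ideal of `p`. -/
def perpIdeal (hinv : B.lieInvariant L) (p : LieSubalgebra K L) : LieIdeal K p.normalizer where
  toSubmodule := (perp B p.toSubmodule).comap p.normalizer.toSubmodule.subtype
  lie_mem {y _} hz := lie_mem_perp hinv y.2 hz

/-- The projection `(p ∩ q) + q^⊥` of a subalgebra `p` to a subalgebra `q ⊇ q^⊥`; for parabolic
`p` and `q` this is the subalgebra `r` of the theorem. -/
def projectionSubalgebra (hinv : B.lieInvariant L) (p : LieSubalgebra K L) {q : LieSubalgebra K L}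
    (hq : perp B q.toSubmodule ≤ q.toSubmodule) : LieSubalgebra K L where
  toSubmodule := (p.toSubmodule ⊓ q.toSubmodule) ⊔ perp B q.toSubmodule
  lie_mem' {a b} ha hb := by
    obtain ⟨u, hu, v, hv, rfl⟩ := Submodule.mem_sup.1 ha
    obtain ⟨u', hu', v', hv', rfl⟩ := Submodule.mem_sup.1 hb
    have hstable {y z : L} (hy : y ∈ q) (hz : z ∈ perp B q.toSubmodule) :
        ⁅y, z⁆ ∈ perp B q.toSubmodule := lie_mem_perp hinv (q.le_normalizer hy) hz
    have hvu' : ⁅v, u'⁆ ∈ perp B q.toSubmodule := lie_skew v u' ▸ neg_mem (hstable hu'.2 hv)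
    rw [lie_add, add_lie, add_assoc]
    refine Submodule.add_mem_sup (p ⊓ q |>.lie_mem hu hu') ?_
    rw [add_lie]
    exact add_mem hvu' (add_mem (hstable hu.2 hv') (hstable (hq hv) hv'))

lemma lie_top_perpIdeal [FiniteDimensional K L] (hs : B.IsSymm) (hnd : B.Nondegenerate)
    (hinv : B.lieInvariant L) {p : LieSubalgebra K L} (hp : IsParabolic B p) :
    ⁅(⊤ : LieIdeal K p.normalizer), perpIdeal hinv p⁆ = perpIdeal hinv p := by
  refine le_antisymm (LieSubmodule.lie_le_right _ _) fun z hz ↦ ?_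
  let S : Submodule K L := (⁅(⊤ : LieIdeal K p.normalizer), perpIdeal hinv p⁆).toSubmodule.map
    p.normalizer.toSubmodule.subtype
  have hlie {y v : L} (hy : y ∈ p) (hv : v ∈ perp B p.toSubmodule) : ⁅y, v⁆ ∈ S :=
    ⟨⁅(⟨y, p.le_normalizer hy⟩ : p.normalizer), (⟨v, p.le_normalizer (hp.1 hv)⟩ : p.normalizer)⁆,
      LieSubmodule.lie_mem_lie (LieSubmodule.mem_top _) hv, rfl⟩
  have hS : perp B S ≤ p.toSubmodule := fun u hu ↦ by
    rw [← hp.2]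
    refine (p.mem_normalizer_iff' u).2 fun y hy ↦ ?_
    rw [← LieSubalgebra.mem_toSubmodule, ← perp_perp hs hnd p.toSubmodule]
    intro v hv
    rw [hinv, hu _ (hlie hy hv), neg_zero]
  have hzS : (z : L) ∈ S := perp_perp hs hnd S ▸ perp_anti hS hz
  obtain ⟨w, hw, hwz⟩ := hzS
  exact Subtype.ext hwz ▸ hw

variable [FiniteDimensional K L] {V : Type*} [AddCommGroup V] [Module K V] [LieRingModule L V]
  [LieModule K L V] [FiniteDimensional K V]

lemma isNilpotent_perpIdeal_of_isParabolic [CharZero K] (hnd : (traceForm K L V).Nondegenerate)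
    {p : LieSubalgebra K L} (hp : IsParabolic (traceForm K L V) p) :
    LieModule.IsNilpotent (perpIdeal (traceForm_lieInvariant K L V) p) V := by
  rw [← lie_top_perpIdeal ⟨traceForm_comm K L V⟩ hnd _ hp]
  refine isNilpotent_lie_top_of_traceForm_eq_zero fun y z hz ↦ ?_
  change traceForm K L V y z = 0
  rw [traceForm_comm]
  exact hz y (hp.2.le y.2)

lemma isParabolic_traceForm_iff [CharZero K] (hnd : (traceForm K L V).Nondegenerate)
    (p : LieSubalgebra K L) :
    IsParabolic (traceForm K L V) p ↔ perp (traceForm K L V) p.toSubmodule ≤ p.toSubmodule ∧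
      ∀ z ∈ perp (traceForm K L V) p.toSubmodule, IsNilpotent (toEnd K L V z) := by
  let I := perpIdeal (traceForm_lieInvariant K L V) p
  refine ⟨fun hp ↦ ⟨hp.1, fun z hz ↦ ?_⟩, fun ⟨hle, hnil⟩ ↦ ⟨hle, ?_⟩⟩
  · have hI : LieModule.IsNilpotent I V := isNilpotent_perpIdeal_of_isParabolic hnd hp
    exact isNilpotent_toEnd_of_isNilpotent K I V ⟨⟨z, p.le_normalizer (hp.1 hz)⟩, hz⟩
  · have hI : LieModule.IsNilpotent I V :=
      isNilpotent_iff_forall' (R := K).2 fun z ↦ hnil z z.2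
    refine le_antisymm (fun y hy ↦ ?_) p.le_normalizer
    rw [← LieSubalgebra.mem_toSubmodule, ← perp_perp ⟨traceForm_comm K L V⟩ hnd p.toSubmodule]
    intro z hz
    exact traceForm_eq_zero_of_mem_isNilpotent (L := p.normalizer) (I := I) ⟨y, hy⟩
      (z := ⟨z, p.le_normalizer (hle hz)⟩) hz

end Parabolic

/-- for parabolic subalgebras `p, q` of a reductive Lie algebra with
admissible trace form `B` (so `nil(p) = p^⊥`, `nil(q) = q^⊥`), the subspace
`r = (p ∩ q) + nil(q)` is a parabolic subalgebra with
`nil(r) = (nil(p) ∩ q) + nil(q)`. -/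
theorem parabolic_pair_projection
    (K L : Type) [Field K] [CharZero K] [LieRing L] [LieAlgebra K L]
    [FiniteDimensional K L]
    (B : LinearMap.BilinForm K L)
    (htrace : ∃ R : FinDimRep K L, B = LieModule.traceForm K L R.carrier)
    (hnd : B.Nondegenerate)
    (p q : LieSubalgebra K L)
    (hp : IsParabolic B p) (hq : IsParabolic B q) :
    ∃ r : LieSubalgebra K L,
      r.toSubmodule = (p.toSubmodule ⊓ q.toSubmodule) ⊔ perp B q.toSubmodule ∧
      IsParabolic B r ∧
      perp B r.toSubmodule =
        (perp B p.toSubmodule ⊓ q.toSubmodule) ⊔ perp B q.toSubmodule := by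
  obtain ⟨R, rfl⟩ := htrace
  have hinv := traceForm_lieInvariant K L R.carrier
  have hr := perp_inf_sup_perp ⟨traceForm_comm K L R.carrier⟩ hnd p.toSubmodule hq.1
  refine ⟨projectionSubalgebra hinv p hq.1, rfl, ?_, hr⟩
  refine (isParabolic_traceForm_iff hnd _).2 ⟨?_, fun z hz ↦ ?_⟩
  · exact hr.trans_le (sup_le_sup_right (inf_le_inf_right _ hp.1) _)
  · obtain ⟨u, ⟨hup, huq⟩, v, hv, rfl⟩ := Submodule.mem_sup.1 (hr.le hz)
    have hu := ((isParabolic_traceForm_iff hnd p).1 hp).2 u hup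
    have hnil := isNilpotent_perpIdeal_of_isParabolic hnd hq
    exact isNilpotent_toEnd_add_of_mem (L := q.normalizer) (I := perpIdeal hinv q)
      (x := ⟨u, q.le_normalizer huq⟩) (z := ⟨v, q.le_normalizer (hq.1 hv)⟩) hu hv
end

section
/- Let x ∈ g be an element of a Lie algebra over a perfect field acting on a finite-dimensional semisimple g-module V via ρ, and suppose x = x_s + x_n where ad(x_s) is semisimple, ad(x_n) is nilpotent, x_n ∈ [g, g], [x_s, x_n] = 0, and the field has characteristic zero. Then ρ(x_s) is the semisimple part and ρ(x_n) the nilpotent part of the Jordan decomposition of ρ(x). -/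
/-!
Let `ρ : L → gl(V)` be the representation and `ρ(x) = n + s` the Jordan decomposition of an
arbitrary `ρ(x)`. Then `ad ρ(x) = ad n + ad s` is the Jordan decomposition of `ad ρ(x)`, and `ad n`
and `ad s`, being polynomials in `ad ρ(x)`, preserve the subalgebra `ρ(L)`. By uniqueness of the
Jordan decomposition on `ρ(L)`, `ad x` semisimple forces `n` to centralise `ρ(L)`, and `ad x`
nilpotent forces `s` to centralise it.

In the first case `n` is a nilpotent endomorphism of the `L`-module `V`, and it preserves every
submodule because it is a polynomial in `ρ(x)`; by complete reducibility it vanishes. In the second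
case, if `x ∈ [L, L]`, then `ρ(x)` has trace zero against everything centralising `ρ(L)`, so
`tr (s t) = 0` for every polynomial `t` in `s`. Choosing `t` with `s t s = s` makes `s t` an
idempotent of trace zero, so `s t = 0` in characteristic zero, and hence `s = 0`.
-/

theorem exists_dvd_mul_sq_sub_self_of_squarefree {R : Type*} [CommRing R] [IsDomain R]
    [IsPrincipalIdealRing R] {m : R} (hm : Squarefree m) (p : R) :
    ∃ b, m ∣ b * p ^ 2 - p := by
  obtain ⟨a, b, hab⟩ := IsBezout.gcd_eq_sum m (p ^ 2)
  have hgcd : Squarefree (IsBezout.gcd m (p ^ 2)) :=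
    hm.squarefree_of_dvd (IsBezout.gcd_dvd_left m (p ^ 2))
  obtain ⟨c, hc⟩ : IsBezout.gcd m (p ^ 2) ∣ p :=
    (hgcd.dvd_pow_iff_dvd two_ne_zero).mp (IsBezout.gcd_dvd_right m (p ^ 2))
  exact ⟨c * b, -(c * a), by linear_combination c * hab - hc⟩

section Endomorphism

open scoped Algebra

section CommRing

variable {R M N : Type*} [CommRing R] [AddCommGroup M] [Module R M] [AddCommGroup N] [Module R N]

theorem invtSubmodule_le_of_mem_adjoin_singleton {f g : Module.End R M} (hg : g ∈ R[f]) :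
    f.invtSubmodule ≤ g.invtSubmodule := by
  rw [Algebra.adjoin_singleton_eq_range_aeval] at hg
  obtain ⟨q, rfl⟩ := hg
  exact fun p hp m hm ↦ Polynomial.aeval_apply_smul_mem_of_le_comap hm q f hp

variable {π : M →ₗ[R] N} {f : Module.End R M} {g : Module.End R N}

theorem isSemisimple_of_surjective_of_comp_eq (hπ : Function.Surjective π)
    (hfg : π ∘ₗ f = g ∘ₗ π) (hf : f.IsSemisimple) : g.IsSemisimple := by
  let πX : Module.AEval' f →ₗ[Polynomial R] Module.AEval' g :=
    .ofAEval f (Module.AEval'.of g ∘ₗ π) fun m ↦ by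
      simpa [Module.AEval'.X_smul_of] using LinearMap.congr_fun hfg m
  have hπX : Function.Surjective πX :=
    (Module.AEval'.of g).surjective.comp (hπ.comp (Module.AEval'.of f).symm.surjective)
  have : IsSemisimpleModule (Polynomial R) (Module.AEval' f) := hf
  exact IsSemisimpleModule.of_surjective πX hπX

theorem isNilpotent_of_surjective_of_comp_eq (hπ : Function.Surjective π)
    (hfg : π ∘ₗ f = g ∘ₗ π) (hf : IsNilpotent f) : IsNilpotent g := by
  obtain ⟨k, hk⟩ := hf
  refine ⟨k, (LinearMap.cancel_right hπ).mp ?_⟩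
  rw [Module.End.commute_pow_left_of_commute hfg.symm k, hk, LinearMap.comp_zero,
    LinearMap.zero_comp]

end CommRing

variable {K V : Type*} [Field K] [AddCommGroup V] [Module K V] [FiniteDimensional K V]

theorem exists_isNilpotent_isSemisimple_commute [PerfectField K] (f : Module.End K V) :
    ∃ n s : Module.End K V, n ∈ K[f] ∧ IsNilpotent n ∧ s.IsSemisimple ∧ Commute n s ∧
      f = n + s := by
  obtain ⟨n, hnf, s, hsf, hn, hs, hf⟩ := f.exists_isNilpotent_isSemisimple
  have hfn : Commute f n := Algebra.commute_of_mem_adjoin_self hnf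
  exact ⟨n, s, hnf, hn, hs, Algebra.commute_of_mem_adjoin_singleton_of_commute hsf hfn.symm, hf⟩

theorem exists_mem_adjoin_mul_mul_self_eq_self_of_isSemisimple {s : Module.End K V}
    (hs : s.IsSemisimple) : ∃ t ∈ K[s], s * t * s = s := by
  obtain ⟨b, hb⟩ := exists_dvd_mul_sq_sub_self_of_squarefree hs.minpoly_squarefree Polynomial.X
  have hmem : Polynomial.aeval s b ∈ K[s] := Polynomial.aeval_mem_adjoin_singleton K s
  have hsq : Polynomial.aeval s b * s ^ 2 - s = 0 := by
    simpa using minpoly.dvd_iff.mp hb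
  refine ⟨Polynomial.aeval s b, hmem, ?_⟩
  rw [(Algebra.commute_of_mem_adjoin_self hmem).eq, mul_assoc, ← sq, sub_eq_zero.mp hsq]

theorem eq_zero_of_isSemisimple_of_trace_mul_eq_zero [CharZero K] {s : Module.End K V}
    (hs : s.IsSemisimple) (htr : ∀ t ∈ K[s], LinearMap.trace K V (s * t) = 0) : s = 0 := by
  obtain ⟨t, ht, hsts⟩ := exists_mem_adjoin_mul_mul_self_eq_self_of_isSemisimple hs
  have hidem : IsIdempotentElem (s * t) := by
    rw [IsIdempotentElem, ← mul_assoc, hsts]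
  have hst : s * t = 0 := LinearMap.IsIdempotentElem.eq_zero_of_trace_eq_zero hidem (htr t ht)
  rw [← hsts, hst, zero_mul]

end Endomorphism

section Adjoint

open LieAlgebra (ad)

attribute [local instance] LieRing.ofAssociativeRing

section CommRing

variable {R L L' : Type*} [CommRing R] [LieRing L] [LieAlgebra R L] [LieRing L'] [LieAlgebra R L']

theorem comp_ad_eq_ad_apply_comp (φ : L →ₗ⁅R⁆ L') (x : L) :
    (φ : L →ₗ[R] L') ∘ₗ ad R L x = ad R L' (φ x) ∘ₗ (φ : L →ₗ[R] L') := by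
  ext y
  exact φ.map_lie x y

variable {φ : L →ₗ⁅R⁆ L'} {x : L}

theorem isSemisimple_ad_apply_of_surjective (hφ : Function.Surjective φ)
    (hx : (ad R L x).IsSemisimple) : (ad R L' (φ x)).IsSemisimple :=
  isSemisimple_of_surjective_of_comp_eq hφ (comp_ad_eq_ad_apply_comp φ x) hx

theorem isNilpotent_ad_apply_of_surjective (hφ : Function.Surjective φ)
    (hx : IsNilpotent (ad R L x)) : IsNilpotent (ad R L' (φ x)) :=
  isNilpotent_of_surjective_of_comp_eq hφ (comp_ad_eq_ad_apply_comp φ x) hx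

end CommRing

variable {K V : Type*} [Field K] [PerfectField K] [AddCommGroup V] [Module K V]
  [FiniteDimensional K V] {H : LieSubalgebra K (Module.End K V)} {x : H} {n s : Module.End K V}

theorem exists_isNilpotent_isSemisimple_ad_eq_add (hn : IsNilpotent n) (hs : s.IsSemisimple)
    (hc : Commute n s) (hx : (x : Module.End K V) = n + s) :
    ∃ N S : Module.End K H, IsNilpotent N ∧ S.IsSemisimple ∧ Commute N S ∧ ad K H x = N + S ∧
      (∀ y, (N y : Module.End K V) = ⁅n, (y : Module.End K V)⁆) ∧
      ∀ y, (S y : Module.End K V) = ⁅s, (y : Module.End K V)⁆ := by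
  have hinv : H.toSubmodule ∈ (ad K (Module.End K V) (n + s)).invtSubmodule :=
    fun _ hy ↦ H.lie_mem (hx ▸ x.2) hy
  have hN := invtSubmodule_le_of_mem_adjoin_singleton
    (LieAlgebra.ad_mem_adjoin_of_isNilpotent hc hn hs) hinv
  have hS := invtSubmodule_le_of_mem_adjoin_singleton
    (LieAlgebra.ad_mem_adjoin_of_isSemisimple hc hn hs) hinv
  refine ⟨(ad K _ n).restrict hN, (ad K _ s).restrict hS,
    Module.End.isNilpotent.restrict hN (LieAlgebra.ad_nilpotent_of_nilpotent hn),
    (LieAlgebra.ad_isSemisimple_of_isSemisimple hs).restrict hS,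
    LinearMap.restrict_commute (LieAlgebra.commute_ad_of_commute hc) hN hS, ?_,
    fun _ ↦ rfl, fun _ ↦ rfl⟩
  ext y : 2
  calc ⁅(x : Module.End K V), (y : Module.End K V)⁆
      = ⁅n + s, (y : Module.End K V)⁆ := by rw [hx]
    _ = ⁅n, (y : Module.End K V)⁆ + ⁅s, (y : Module.End K V)⁆ := add_lie n s _

theorem commute_of_isSemisimple_ad (hn : IsNilpotent n) (hs : s.IsSemisimple)
    (hc : Commute n s) (hx : (x : Module.End K V) = n + s) (had : (ad K H x).IsSemisimple)
    (y : H) : Commute n (y : Module.End K V) := by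
  obtain ⟨N, S, hN, hS, hNS, hsum, hNy, -⟩ := exists_isNilpotent_isSemisimple_ad_eq_add hn hs hc hx
  have hN0 : N = 0 := (Module.End.isNilpotent_isSemisimple_unique hN hS .zero had hNS
    (Commute.zero_left _) (by rw [zero_add, hsum])).1
  rw [commute_iff_lie_eq, ← hNy, hN0, LinearMap.zero_apply, ZeroMemClass.coe_zero]

theorem commute_of_isNilpotent_ad (hn : IsNilpotent n) (hs : s.IsSemisimple)
    (hc : Commute n s) (hx : (x : Module.End K V) = n + s) (had : IsNilpotent (ad K H x))
    (y : H) : Commute s (y : Module.End K V) := by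
  obtain ⟨N, S, hN, hS, hNS, hsum, -, hSy⟩ := exists_isNilpotent_isSemisimple_ad_eq_add hn hs hc hx
  have hS0 : S = 0 := (Module.End.isNilpotent_isSemisimple_unique hN hS had
    Module.End.isSemisimple_zero hNS (Commute.zero_right _) (by rw [add_zero, hsum])).2
  rw [commute_iff_lie_eq, ← hSy, hS0, LinearMap.zero_apply, ZeroMemClass.coe_zero]

end Adjoint

section Representation

open LieAlgebra (ad)
open LieModule (toEnd)

attribute [local instance] LieRing.ofAssociativeRing

section CommRing

variable {R L M : Type*} [CommRing R] [LieRing L] [AddCommGroup M] [Module R M]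
  [LieRingModule L M]

theorem eq_zero_of_isNilpotent_of_forall_mem [ComplementedLattice (LieSubmodule R L M)]
    {f : M →ₗ⁅R,L⁆ M} (hnil : IsNilpotent (f : Module.End R M))
    (hf : ∀ N : LieSubmodule R L M, ∀ m ∈ N, f m ∈ N) : f = 0 := by
  obtain ⟨N, hN⟩ := exists_isCompl f.ker
  have hker (m : M) (hm : f (f m) = 0) : f m = 0 := by
    obtain ⟨z, hz, w, hw, rfl⟩ : ∃ z ∈ f.ker, ∃ w ∈ N, z + w = m :=
      (LieSubmodule.mem_sup _ _ _).mp (hN.sup_eq_top ▸ LieSubmodule.mem_top m)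
    have hfw : f (z + w) = f w := by rw [map_add, f.mem_ker.mp hz, zero_add]
    have hmem : f (z + w) ∈ f.ker ⊓ N := ⟨f.mem_ker.mpr hm, hfw ▸ hf N w hw⟩
    rwa [hN.inf_eq_bot, LieSubmodule.mem_bot] at hmem
  have hpow (k : ℕ) (m : M) (hm : ((f : Module.End R M) ^ k) m = 0) : f m = 0 := by
    induction k generalizing m with
    | zero => rw [show m = 0 from hm, map_zero]
    | succ k ih => exact hker m (ih (f m) hm)
  obtain ⟨k, hk⟩ := hnil
  ext m
  exact hpow k m (by rw [hk, LinearMap.zero_apply])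

variable [LieAlgebra R L] [LieModule R L M]

theorem commute_toEnd_of_lie_eq_zero {x y : L} (h : ⁅x, y⁆ = 0) :
    Commute (toEnd R L M x) (toEnd R L M y) := by
  rw [commute_iff_lie_eq, ← LieHom.map_lie, h, map_zero]

theorem trace_toEnd_mul_eq_zero_of_mem_commutator {x : L}
    (hx : x ∈ ⁅(⊤ : LieIdeal R L), (⊤ : LieIdeal R L)⁆) {c : Module.End R M}
    (hc : ∀ y, Commute c (toEnd R L M y)) : LinearMap.trace R M (toEnd R L M x * c) = 0 := by
  rw [← LieSubmodule.mem_toSubmodule, LieSubmodule.lieIdeal_oper_eq_linear_span'] at hx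
  induction hx using Submodule.span_induction with
  | mem x h =>
    obtain ⟨a, -, b, -, rfl⟩ := h
    rw [LieHom.map_lie, LinearMap.trace_lie_mul_eq, (hc b).symm.lie_eq, mul_zero, map_zero]
  | zero => rw [map_zero, zero_mul, map_zero]
  | add x y _ _ hx hy => rw [map_add, add_mul, map_add, hx, hy, add_zero]
  | smul r x _ hx => rw [map_smul, smul_mul_assoc, map_smul, hx, smul_zero]

end CommRing

variable {K L V : Type*} [Field K] [LieRing L] [LieAlgebra K L] [AddCommGroup V] [Module K V]
  [LieRingModule L V] [LieModule K L V] [FiniteDimensional K V] {x : L}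

section PerfectField

variable [PerfectField K] {n s : Module.End K V}

theorem commute_toEnd_of_isSemisimple_ad (hn : IsNilpotent n) (hs : s.IsSemisimple)
    (hc : Commute n s) (hx : toEnd K L V x = n + s) (had : (ad K L x).IsSemisimple) (y : L) :
    Commute n (toEnd K L V y) :=
  commute_of_isSemisimple_ad hn hs hc hx
    (isSemisimple_ad_apply_of_surjective (toEnd K L V).surjective_rangeRestrict had)
    ((toEnd K L V).rangeRestrict y)

theorem commute_toEnd_of_isNilpotent_ad (hn : IsNilpotent n) (hs : s.IsSemisimple)
    (hc : Commute n s) (hx : toEnd K L V x = n + s) (had : IsNilpotent (ad K L x)) (y : L) :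
    Commute s (toEnd K L V y) :=
  commute_of_isNilpotent_ad hn hs hc hx
    (isNilpotent_ad_apply_of_surjective (toEnd K L V).surjective_rangeRestrict had)
    ((toEnd K L V).rangeRestrict y)

theorem isSemisimple_toEnd_of_isSemisimple_ad [ComplementedLattice (LieSubmodule K L V)]
    (had : (ad K L x).IsSemisimple) : (toEnd K L V x).IsSemisimple := by
  obtain ⟨n, s, hnx, hn, hs, hc, hx⟩ := exists_isNilpotent_isSemisimple_commute (toEnd K L V x)
  have hcomm := commute_toEnd_of_isSemisimple_ad hn hs hc hx had
  let nL : V →ₗ⁅K,L⁆ V := { n with map_lie' := fun {y v} ↦ LinearMap.congr_fun (hcomm y).eq v }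
  have hinv (N : LieSubmodule K L V) (v : V) (hv : v ∈ N) : n v ∈ N :=
    invtSubmodule_le_of_mem_adjoin_singleton hnx
      (fun _ hw ↦ N.lie_mem hw : N.toSubmodule ∈ (toEnd K L V x).invtSubmodule) hv
  have hnL : nL = 0 := eq_zero_of_isNilpotent_of_forall_mem hn hinv
  have hn0 : n = 0 := LinearMap.ext fun v ↦ DFunLike.congr_fun hnL v
  rwa [hx, hn0, zero_add]

end PerfectField

theorem isNilpotent_toEnd_of_isNilpotent_ad_of_mem_commutator [CharZero K]
    (had : IsNilpotent (ad K L x)) (hx : x ∈ ⁅(⊤ : LieIdeal K L), (⊤ : LieIdeal K L)⁆) :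
    IsNilpotent (toEnd K L V x) := by
  obtain ⟨n, s, -, hn, hs, hc, hns⟩ := exists_isNilpotent_isSemisimple_commute (toEnd K L V x)
  have hcomm := commute_toEnd_of_isNilpotent_ad hn hs hc hns had
  have hs0 : s = 0 := by
    refine eq_zero_of_isSemisimple_of_trace_mul_eq_zero hs fun t ht ↦ ?_
    have hxt : LinearMap.trace K V (toEnd K L V x * t) = 0 :=
      trace_toEnd_mul_eq_zero_of_mem_commutator hx fun y ↦
        (Algebra.commute_of_mem_adjoin_singleton_of_commute ht (hcomm y).symm).symm
    have hnt : LinearMap.trace K V (n * t) = 0 :=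
      (LinearMap.isNilpotent_trace_of_isNilpotent
        ((Algebra.commute_of_mem_adjoin_singleton_of_commute ht hc).isNilpotent_mul_right
          hn)).eq_zero
    rwa [hns, add_mul, map_add, hnt, zero_add] at hxt
  rwa [hns, hs0, add_zero]

end Representation

theorem jordan_parts_of_semisimple_rep_general
    (K L V : Type*) [Field K] [CharZero K] [LieRing L] [LieAlgebra K L]
    [AddCommGroup V] [Module K V] [LieRingModule L V] [LieModule K L V]
    [FiniteDimensional K V]
    (hss : ComplementedLattice (LieSubmodule K L V))
    (x xs xn : L) (hx : x = xs + xn)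
    (hads : (LieAlgebra.ad K L xs).IsSemisimple)
    (hadn : IsNilpotent (LieAlgebra.ad K L xn))
    (hxn : xn ∈ ⁅(⊤ : LieIdeal K L), (⊤ : LieIdeal K L)⁆)
    (hcomm : ⁅xs, xn⁆ = 0) :
    (LieModule.toEnd K L V xs).IsSemisimple ∧
      IsNilpotent (LieModule.toEnd K L V xn) ∧
      Commute (LieModule.toEnd K L V xs) (LieModule.toEnd K L V xn) ∧
      LieModule.toEnd K L V x =
        LieModule.toEnd K L V xs + LieModule.toEnd K L V xn :=
  ⟨isSemisimple_toEnd_of_isSemisimple_ad hads,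
    isNilpotent_toEnd_of_isNilpotent_ad_of_mem_commutator hadn hxn,
    commute_toEnd_of_lie_eq_zero hcomm,
    by rw [hx, map_add]⟩

/-- if `V` is a semisimple (completely reducible) finite-dimensional
representation of `g` over a field of characteristic zero, and `x = x_s + x_n` with
`ad(x_s)` semisimple, `ad(x_n)` nilpotent, `x_n ∈ [g,g]` and `[x_s, x_n] = 0`, then
`ρ(x_s)` and `ρ(x_n)` are the semisimple and nilpotent parts of the Jordan
decomposition of `ρ(x)` (they are commuting semisimple/nilpotent endomorphisms
summing to `ρ(x)`). -/
theorem jordan_parts_of_semisimple_rep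
    (K L V : Type*) [Field K] [CharZero K] [LieRing L] [LieAlgebra K L]
    [FiniteDimensional K L]
    [AddCommGroup V] [Module K V] [LieRingModule L V] [LieModule K L V]
    [FiniteDimensional K V]
    (hss : ComplementedLattice (LieSubmodule K L V))
    (x xs xn : L) (hx : x = xs + xn)
    (hads : (LieAlgebra.ad K L xs).IsSemisimple)
    (hadn : IsNilpotent (LieAlgebra.ad K L xn))
    (hxn : xn ∈ ⁅(⊤ : LieIdeal K L), (⊤ : LieIdeal K L)⁆)
    (hcomm : ⁅xs, xn⁆ = 0) :
    (LieModule.toEnd K L V xs).IsSemisimple ∧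
      IsNilpotent (LieModule.toEnd K L V xn) ∧
      Commute (LieModule.toEnd K L V xs) (LieModule.toEnd K L V xn) ∧
      LieModule.toEnd K L V x =
        LieModule.toEnd K L V xs + LieModule.toEnd K L V xn :=
  jordan_parts_of_semisimple_rep_general K L V hss x xs xn hx hads hadn hxn hcomm
end
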